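/- For each n > 3, the semigroup T_n(2) of all upper triangular n×n matrices over the two-element field is nonfinitely based. -/

import Mathlib

/-! ### Identities and finite bases -/

/-- A semigroup `S` satisfies the identity `u ≈ v` (for words `u`, `v` in the free semigroup on
the countably infinite set of variables `ℕ`) if every homomorphism from the free semigroup to
`S` — equivalently, every substitution `f : ℕ → S` — equalizes `u` and `v`. -/
def Satisfies (S : Type*) [Semigroup S] (u v : FreeSemigroup ℕ) : Prop :=
  ∀ f : ℕ → S, FreeSemigroup.lift f u = FreeSemigroup.lift f v

/-- A semigroup is finitely based if there is a finite set of identities it satisfies such that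
every semigroup satisfying those identities satisfies every identity of `S`. -/
def FinitelyBased (S : Type*) [Semigroup S] : Prop :=
  ∃ B : Finset (FreeSemigroup ℕ × FreeSemigroup ℕ),
    (∀ p ∈ B, Satisfies S p.1 p.2) ∧
    ∀ (T : Type) [Semigroup T], (∀ p ∈ B, Satisfies T p.1 p.2) →
      ∀ u v : FreeSemigroup ℕ, Satisfies S u v → Satisfies T u v

/-- `T` belongs to the variety generated by `S`: `T` satisfies every identity of `S`. -/
def InVarietyOf (T S : Type*) [Semigroup T] [Semigroup S] : Prop :=
  ∀ u v : FreeSemigroup ℕ, Satisfies S u v → Satisfies T u v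

/-! ### Upper triangular matrices over the two-element field -/

/-- The multiplicative semigroup `T_n(2)` of all upper triangular `n × n` matrices over the
two-element field `𝔽₂ = ZMod 2`. -/
def TriSub (n : ℕ) : Subsemigroup (Matrix (Fin n) (Fin n) (ZMod 2)) where
  carrier := {A | A.BlockTriangular id}
  mul_mem' := fun ha hb => ha.mul hb

/-!
A semigroup `S` is nonfinitely based as soon as, for every `k`, it satisfies an identity `u ≈ v`
with `u ≠ v` such that every word of length at most `k` with a substitution instance inside `u` is
an isoterm for `S`: the syntactic quotient of `u` then satisfies all identities of `S` in words of
length at most `k`, but not `u ≈ v`.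

Isoterms come from automata. The action of a partial automaton with states `a < b < c < d` and
nondecreasing transitions is given by upper triangular matrices, and such automata can read off
every letter of a separated word.

Identities come from counting. Take one block of letters for each boolean vector of length `q`, and
arrange the blocks in any order. Each site of a block is a product of two matrices whose order
depends on one coordinate of the vector; as triangular matrices commute on the diagonal, only the
entries above it depend on the vector, and the entry `(i, j)` of a block is a polynomial of degree
`j - i` in the coordinates. A product of all blocks is therefore determined by polynomially many (in
`q`) path sums. Their joint values in the finite ring are fewer than the `(2 ^ q)!` arrangements, so
two arrangements give the same product for every substitution. The coordinates are repeated
cyclically in each block, so that long factors of the resulting words determine the block they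
belong to, while equal letters are far apart; this makes short preimages of factors separated.
-/

namespace TriangularIdentities

open List

/-! ### Words and isoterms -/

section Words

variable {α β : Type*}

/-- The letters of a word, in order; factors of a word are factors of this list. -/
def letters (w : FreeSemigroup α) : List α := w.toFreeMonoid.toList

theorem letters_of (x : α) : letters (FreeSemigroup.of x) = [x] := rfl

theorem letters_mul (v w : FreeSemigroup α) : letters (v * w) = letters v ++ letters w := by
  simp [letters]

theorem letters_injective : Function.Injective (letters : FreeSemigroup α → List α) :=
  FreeMonoid.toList.injective.comp FreeSemigroup.toFreeMonoid_injective

theorem letters_ne_nil (w : FreeSemigroup α) : letters w ≠ [] := by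
  cases w
  simp [letters, FreeSemigroup.toFreeMonoid_mk_eq_cons]

theorem exists_letters_eq {l : List α} (hl : l ≠ []) : ∃ w, letters w = l :=
  ⟨⟨l.head hl, l.tail⟩, by simp [letters, FreeSemigroup.toFreeMonoid_mk_eq_cons]⟩

theorem letters_lift (φ : α → FreeSemigroup β) (w : FreeSemigroup α) :
    letters (FreeSemigroup.lift φ w) = (letters w).flatMap fun x => letters (φ x) := by
  induction w using FreeSemigroup.recOnMul with
  | ih1 x => simp [letters_of]
  | ih2 v w hv hw => rw [map_mul, letters_mul, letters_mul, hv, hw, flatMap_append]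

theorem coe_lift {M : Type*} [Monoid M] (H : Subsemigroup M) (f : α → H) (w : FreeSemigroup α) :
    (FreeSemigroup.lift f w : M) = ((letters w).map fun x => (f x : M)).prod := by
  induction w using FreeSemigroup.recOnMul with
  | ih1 x => simp [letters_of]
  | ih2 v w hv hw => rw [map_mul, letters_mul, map_append, prod_append, ← hv, ← hw]; rfl

end Words

theorem satisfies_coe_iff {M : Type*} [Monoid M] {H : Subsemigroup M} {u v : FreeSemigroup ℕ} :
    Satisfies H u v ↔
      ∀ f : ℕ → M, (∀ x, f x ∈ H) → ((letters u).map f).prod = ((letters v).map f).prod := by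
  refine ⟨fun h f hf => ?_, fun h f => Subtype.ext ?_⟩
  · simpa only [coe_lift] using congrArg Subtype.val (h fun x => ⟨f x, hf x⟩)
  · simpa only [coe_lift] using h (fun x => f x) fun x => (f x).2

/-- A word `p` is an isoterm for a semigroup `S` if `S` satisfies no identity `p ≈ q` other than
the trivial one. -/
def IsIsoterm (S : Type*) [Semigroup S] (p : FreeSemigroup ℕ) : Prop :=
  ∀ q, Satisfies S p q → p = q

/-- The syntactic congruence of the one-word language `{u}`: two words are congruent if they occur
as factors of `u` in the same contexts. -/
def syntacticCon (u : FreeSemigroup ℕ) : Con (FreeSemigroup ℕ) where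
  r v w := ∀ a b, a ++ letters v ++ b = letters u ↔ a ++ letters w ++ b = letters u
  iseqv := ⟨fun _ _ _ => Iff.rfl, fun h a b => (h a b).symm,
    fun h₁ h₂ a b => (h₁ a b).trans (h₂ a b)⟩
  mul' {v w v' w'} h h' a b := by
    have hv := h a (letters v' ++ b)
    have hw := h' (a ++ letters w) b
    simp only [letters_mul, append_assoc] at hv hw ⊢
    exact hv.trans hw

theorem syntacticCon_of_not_isInfix {u v w : FreeSemigroup ℕ}
    (hv : ¬ letters v <:+: letters u) (hw : ¬ letters w <:+: letters u) : syntacticCon u v w :=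
  fun a b => ⟨fun h => (hv ⟨a, b, h⟩).elim, fun h => (hw ⟨a, b, h⟩).elim⟩

theorem eq_of_syntacticCon {u v : FreeSemigroup ℕ} (h : syntacticCon u u v) : u = v := by
  have := (h [] []).1 (by simp)
  exact letters_injective (by simpa using this.symm)

theorem satisfies_quotient_iff {c : Con (FreeSemigroup ℕ)} {p q : FreeSemigroup ℕ} :
    Satisfies c.Quotient p q ↔
      ∀ φ : ℕ → FreeSemigroup ℕ, c (FreeSemigroup.lift φ p) (FreeSemigroup.lift φ q) := by
  have lift_coe (φ : ℕ → FreeSemigroup ℕ) (w : FreeSemigroup ℕ) :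
      FreeSemigroup.lift (fun x => (φ x : c.Quotient)) w = (FreeSemigroup.lift φ w : _) := by
    induction w using FreeSemigroup.recOnMul with
    | ih1 x => simp
    | ih2 v w hv hw => rw [map_mul, map_mul, hv, hw, Con.coe_mul]
  refine ⟨fun h φ => c.eq.1 (by simpa only [lift_coe] using h fun x => (φ x : _)), fun h f => ?_⟩
  obtain ⟨φ, rfl⟩ : ∃ φ : ℕ → FreeSemigroup ℕ, f = fun x => (φ x : c.Quotient) :=
    ⟨fun x => (f x).out, funext fun x => (Quotient.out_eq (f x)).symm⟩
  simpa only [lift_coe] using c.eq.2 (h φ)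

section SyntacticQuotient

variable {S : Type*} [Semigroup S]

theorem satisfies_syntacticQuotient {u p q : FreeSemigroup ℕ} (h : Satisfies S p q)
    (hp : ∀ φ : ℕ → FreeSemigroup ℕ, letters (FreeSemigroup.lift φ p) <:+: letters u →
      IsIsoterm S p)
    (hq : ∀ φ : ℕ → FreeSemigroup ℕ, letters (FreeSemigroup.lift φ q) <:+: letters u →
      IsIsoterm S q) :
    Satisfies (syntacticCon u).Quotient p q := by
  refine satisfies_quotient_iff.2 fun φ => ?_
  by_cases hp' : letters (FreeSemigroup.lift φ p) <:+: letters u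
  · exact hp φ hp' q h ▸ (syntacticCon u).refl _
  by_cases hq' : letters (FreeSemigroup.lift φ q) <:+: letters u
  · exact hq φ hq' p (fun f => (h f).symm) ▸ (syntacticCon u).refl _
  exact syntacticCon_of_not_isInfix hp' hq'

theorem not_finitelyBased_of_isIsoterm
    (H : ∀ k, ∃ u v, Satisfies S u v ∧ u ≠ v ∧ ∀ p, (letters p).length ≤ k →
      ∀ φ : ℕ → FreeSemigroup ℕ, letters (FreeSemigroup.lift φ p) <:+: letters u →
        IsIsoterm S p) :
    ¬ FinitelyBased S := by
  rintro ⟨B, hB, hbasis⟩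
  obtain ⟨u, v, huv, hne, hiso⟩ :=
    H (B.sup fun e => max (letters e.1).length (letters e.2).length)
  have hlen {e} (he : e ∈ B) : max (letters e.1).length (letters e.2).length ≤ _ :=
    Finset.le_sup (f := fun e => max (letters e.1).length (letters e.2).length) he
  have hT := hbasis (syntacticCon u).Quotient (fun e he => satisfies_syntacticQuotient (hB e he)
    (hiso _ ((le_max_left _ _).trans (hlen he))) (hiso _ ((le_max_right _ _).trans (hlen he)))) u v
  refine hne (eq_of_syntacticCon ?_)
  have lift_of_eq_id : FreeSemigroup.lift FreeSemigroup.of = MulHom.id (FreeSemigroup ℕ) :=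
    FreeSemigroup.hom_ext rfl
  simpa only [lift_of_eq_id, MulHom.id_apply] using
    satisfies_quotient_iff.1 (hT huv) FreeSemigroup.of

end SyntacticQuotient

/-! ### Separated words -/

section Separated

variable {α : Type*}

/-- A word is separated if between any two occurrences of a letter there is a letter that does not
occur before. -/
def Separated (l : List α) : Prop :=
  ∀ X x Y Z, l = X ++ x :: (Y ++ x :: Z) → ∃ t ∈ Y, t ∉ X ++ [x]

theorem Separated.of_append {l l' : List α} (h : Separated (l ++ l')) : Separated l :=
  fun X x Y Z hl => h X x Y (Z ++ l') (by simp [hl])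

theorem Separated.exists_append_nodup {l : List α} (h : Separated l) :
    ∃ A C, l = A ++ C ∧ C.Nodup ∧ (A = [] ∨ ∃ A' t, A = A' ++ [t] ∧ t ∉ A') := by
  induction l using reverseRecOn with
  | nil => exact ⟨[], [], rfl, nodup_nil, .inl rfl⟩
  | append_singleton l y ih =>
    obtain ⟨A, C, rfl, hC, hA⟩ := ih h.of_append
    by_cases hy : y ∈ C
    · obtain ⟨X, Z, rfl⟩ := append_of_mem hy
      obtain ⟨t, htZ, ht⟩ := h (A ++ X) y Z [] (by simp)
      obtain ⟨Z₁, Z₂, rfl, htZ₁⟩ := eq_append_cons_of_mem htZ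
      refine ⟨A ++ X ++ y :: Z₁ ++ [t], Z₂ ++ [y], by simp, ?_, .inr ⟨_, t, rfl, ?_⟩⟩
      · grind
      · grind
    · exact ⟨A, C ++ [y], by simp, by grind, hA⟩

end Separated

/-! ### Partial automata -/

section Automata

variable {σ α R : Type*} [Fintype σ] [DecidableEq σ]

/-- The matrices of a partial deterministic automaton, in which the letter `x` leads from the state
`i` to the state `δ i x`, if defined; its run on a word `l` from `i` ends in `l.foldlM δ i`. -/
def transitionMatrix (R : Type*) [Zero R] [One R] (δ : σ → α → Option σ) (x : α) : Matrix σ σ R :=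
  fun i j => if δ i x = some j then 1 else 0

theorem prod_map_transitionMatrix_apply [Semiring R] (δ : σ → α → Option σ) (l : List α)
    (i j : σ) :
    (l.map (transitionMatrix R δ)).prod i j = if l.foldlM δ i = some j then 1 else 0 := by
  induction l generalizing i with
  | nil => simp [Matrix.one_apply, pure]
  | cons x l ih =>
    simp only [map_cons, prod_cons, Matrix.mul_apply, ih, transitionMatrix, foldlM_cons]
    cases h : δ i x <;> simp [Finset.sum_ite]

end Automata

/-- The semigroup of upper triangular matrices; `TriSub n` is the case `ι = Fin n`,
`R = ZMod 2`. -/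
def upperTriangular (ι R : Type*) [Fintype ι] [LinearOrder ι] [Semiring R] :
    Subsemigroup (Matrix ι ι R) where
  carrier := {A | A.BlockTriangular id}
  mul_mem' := fun ha hb => ha.mul hb

theorem foldlM_eq_of_satisfies {ι R : Type*} [Fintype ι] [LinearOrder ι] [Semiring R] [Nontrivial R]
    {p q : FreeSemigroup ℕ} (h : Satisfies (upperTriangular ι R) p q) {δ : ι → ℕ → Option ι}
    (hδ : ∀ i x j, δ i x = some j → i ≤ j) (i : ι) :
    (letters p).foldlM δ i = (letters q).foldlM δ i := by
  have hmem (x : ℕ) : transitionMatrix R δ x ∈ upperTriangular ι R := fun i j hji =>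
    if_neg fun h => (hδ i x j h).not_gt hji
  have hprod := satisfies_coe_iff.1 h _ hmem
  refine Option.ext fun j => ?_
  have hij := congrFun (congrFun hprod i) j
  rw [prod_map_transitionMatrix_apply, prod_map_transitionMatrix_apply] at hij
  by_cases hp : (letters p).foldlM δ i = some j <;> simp_all

section Probe

variable {σ α : Type*}

theorem foldlM_eq_some_self {δ : σ → α → Option σ} {i : σ} {l : List α}
    (h : ∀ x ∈ l, δ i x = some i) : l.foldlM δ i = some i := by
  induction l with
  | nil => rfl
  | cons x l ih =>
    simpa [h x mem_cons_self] using ih fun x hx => h x (mem_cons_of_mem _ hx)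

variable [LinearOrder σ] [DecidableEq α]

/-- An automaton testing the letter after a separated prefix: it stays in `a` while it reads letters
from `E` and then jumps to `s`, it stays in `b` while it reads letters from `D` and then moves to
`c`, where it accepts (in `d`) or rejects according to whether the next letter is `y`. -/
def probe (a b c d s : σ) (E D : List α) (y : α) (i : σ) (x : α) : Option σ :=
  if i = a then some (if x ∈ E then a else s)
  else if i = b then some (if x ∈ D then b else c)
  else if i = c then if x = y then some d else none
  else some i

variable {a b c d s : σ} {E D : List α} {y : α}

theorem le_of_probe_eq_some (has : a ≤ s) (hbc : b ≤ c) (hcd : c ≤ d) {i j : σ} {x : α}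
    (h : probe a b c d s E D y i x = some j) : i ≤ j := by
  grind [probe]

theorem foldlM_probe_eq_some_iff (hac : a < c) (hbc : b < c) (hcd : c < d) {l : List α} :
    l.foldlM (probe a b c d s E D y) c = some d ↔ l.head? = some y := by
  cases l with
  | nil => simpa [pure] using hcd.ne
  | cons x l =>
    have hloop : l.foldlM (probe a b c d s E D y) d = some d :=
      foldlM_eq_some_self fun x _ => by
        simp [probe, (hac.trans hcd).ne', (hbc.trans hcd).ne', hcd.ne']
    have hstep : probe a b c d s E D y c x = if x = y then some d else none := by
      simp [probe, hac.ne', hbc.ne']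
    rw [foldlM_cons, hstep]
    split_ifs with hx <;> simp [hx, hloop]

theorem exists_foldlM_probe_of_nodup (hab : a < b) (hbc : b < c) {C : List α} (hC : C.Nodup) :
    ∃ s D, a ≤ s ∧ ∀ E y, C.foldlM (probe a b c d s E D y) s = some c := by
  rcases eq_nil_or_concat' C with rfl | ⟨D, z, rfl⟩
  · exact ⟨c, [], (hab.trans hbc).le, fun _ _ => rfl⟩
  · refine ⟨b, D, hab.le, fun E y => ?_⟩
    have hz : z ∉ D := by grind
    rw [foldlM_append, foldlM_eq_some_self fun x hx => by simp [probe, hab.ne', hx]]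
    simp [probe, hab.ne', hz]

theorem Separated.exists_foldlM_probe (hab : a < b) (hbc : b < c) {l : List α}
    (hl : Separated l) :
    ∃ s E D i, a ≤ s ∧ ∀ y, l.foldlM (probe a b c d s E D y) i = some c := by
  obtain ⟨A, C, rfl, hC, hA⟩ := hl.exists_append_nodup
  obtain ⟨s, D, has, hrun⟩ := exists_foldlM_probe_of_nodup (d := d) hab hbc hC
  rcases hA with rfl | ⟨E, t, rfl, ht⟩
  · exact ⟨s, [], D, s, has, hrun []⟩
  · refine ⟨s, E, D, a, has, fun y => ?_⟩
    have hwait : E.foldlM (probe a b c d s E D y) a = some a :=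
      foldlM_eq_some_self fun x hx => by simp [probe, hx]
    have hjump : probe a b c d s E D y a t = some s := by simp [probe, ht]
    simpa [foldlM_append, hwait, hjump] using hrun E y

omit [DecidableEq α] in
theorem head?_eq_of_foldlM_eq (hab : a < b) (hbc : b < c) (hcd : c < d) {l m m' : List α}
    (hl : Separated l) (h : ∀ δ : σ → α → Option σ, (∀ i x j, δ i x = some j → i ≤ j) →
      ∀ i, (l ++ m).foldlM δ i = (l ++ m').foldlM δ i) : m.head? = m'.head? := by
  classical
  obtain ⟨s, E, D, i, has, hrun⟩ := hl.exists_foldlM_probe (d := d) hab hbc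
  refine Option.ext fun y => ?_
  have hy := h (probe a b c d s E D y)
    (fun _ _ _ => le_of_probe_eq_some has hbc.le hcd.le) i
  simp only [foldlM_append, hrun y, Option.bind_eq_bind, Option.bind_some] at hy
  rw [← foldlM_probe_eq_some_iff (hab.trans hbc) hbc hcd, hy,
    foldlM_probe_eq_some_iff (hab.trans hbc) hbc hcd]

omit [DecidableEq α] in
theorem Separated.eq_of_foldlM_eq (hab : a < b) (hbc : b < c) (hcd : c < d) {l l' : List α}
    (hl : Separated l) (h : ∀ δ : σ → α → Option σ, (∀ i x j, δ i x = some j → i ≤ j) →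
      ∀ i, l.foldlM δ i = l'.foldlM δ i) : l = l' := by
  classical
  suffices ∀ m k m', l = k ++ m → l' = k ++ m' → m = m' from this l [] l' rfl rfl
  intro m
  induction m with
  | nil =>
    rintro k m' rfl rfl
    exact (head?_eq_none_iff.1 (head?_eq_of_foldlM_eq hab hbc hcd hl.of_append h).symm).symm
  | cons x m ih =>
    rintro k m' rfl rfl
    obtain ⟨m'', rfl⟩ := head?_eq_some_iff.1
      (head?_eq_of_foldlM_eq hab hbc hcd hl.of_append h).symm
    rw [ih (k ++ [x]) m'' (by simp) (by simp)]

end Probe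

theorem isIsoterm_of_separated {ι R : Type*} [Fintype ι] [LinearOrder ι] [Semiring R] [Nontrivial R]
    {a b c d : ι} (hab : a < b) (hbc : b < c) (hcd : c < d) {p : FreeSemigroup ℕ}
    (hp : Separated (letters p)) : IsIsoterm (upperTriangular ι R) p := fun _ hpq =>
  letters_injective <| hp.eq_of_foldlM_eq hab hbc hcd fun _ hδ i =>
    foldlM_eq_of_satisfies hpq hδ i

-- If `l` is not separated, some letter recurs so that every letter in between is itself repeated in
-- `l`. The images of all these letters under `φ` are then repeated factors of `L`, hence short, and
-- the first letter of the image of the recurring letter is repeated too soon.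
theorem separated_of_flatMap_isInfix {α β : Type*} {φ : α → List β} {l : List α} {L : List β}
    {m K : ℕ} (hrep : ∀ W C, W ++ C ++ W <:+: L → W.length < m)
    (hdist : ∀ w C, w :: (C ++ [w]) <:+: L → K ≤ C.length) (hφ : ∀ x, φ x ≠ [])
    (hl : l.length * m ≤ K) (hL : l.flatMap φ <:+: L) : Separated l := by
  rintro X x Y Z rfl
  by_contra! hY
  have hinfix {U t V T} (h : X ++ x :: (Y ++ x :: Z) = U ++ t :: (V ++ t :: T)) :
      φ t ++ V.flatMap φ ++ φ t <:+: L := by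
    refine .trans ⟨U.flatMap φ, T.flatMap φ, ?_⟩ hL
    simp [h]
  have hx : (φ x).length < m := hrep _ _ (hinfix rfl)
  have hshort : ∀ t ∈ Y, (φ t).length ≤ m := by
    intro t ht
    obtain ⟨Y₁, Y₂, rfl⟩ := append_of_mem ht
    rcases mem_append.1 (hY t ht) with htX | htx
    · obtain ⟨X₁, X₂, rfl⟩ := append_of_mem htX
      exact (hrep _ _ (hinfix (U := X₁) (V := X₂ ++ x :: Y₁) (T := Y₂ ++ x :: Z) (by simp))).le
    · rw [mem_singleton.1 htx]
      exact hx.le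
  obtain ⟨w, W, hw⟩ := exists_cons_of_ne_nil (hφ x)
  have hK : K ≤ (W ++ Y.flatMap φ).length := by
    refine hdist w _ (.trans ⟨[], W, ?_⟩ (hinfix rfl))
    simp [hw]
  have hsum : (Y.flatMap φ).length ≤ Y.length * m := by
    rw [length_flatMap]
    simpa using sum_le_card_nsmul (Y.map fun t => (φ t).length) m (by simpa using hshort)
  refine hl.not_gt ?_
  calc K
    _ ≤ W.length + (Y.flatMap φ).length := by simpa using hK
    _ < m + Y.length * m := by
      rw [hw, length_cons] at hx
      omega
    _ = (Y.length + 1) * m := by ring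
    _ ≤ (X ++ x :: (Y ++ x :: Z)).length * m := by
      gcongr
      simp only [length_append, length_cons]
      omega

/-! ### Path sums -/

section PathSums

variable {Λ R : Type*} [CommSemiring R]

/-- The bilinear map sending functions `f` on letters and `g` on words to the function on words
whose value at `l` is the sum of `a ^ l₁.length * f x * g l₂` over the factorizations
`l = l₁ ++ x :: l₂`. -/
def pathSum (a : R) : (Λ → R) →ₗ[R] (List Λ → R) →ₗ[R] (List Λ → R) :=
  LinearMap.mk₂ R (fun f g l => ∑ k : Fin l.length, a ^ (k : ℕ) * f l[k] * g (l.drop (k + 1)))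
    (fun _ _ _ => funext fun _ => by
      simp [mul_add, add_mul, Finset.sum_add_distrib])
    (fun _ _ _ => funext fun _ => by
      simp only [Pi.smul_apply, smul_eq_mul, Finset.mul_sum]; congr! 1; ring)
    (fun _ _ _ => funext fun _ => by
      simp [mul_add, Finset.sum_add_distrib])
    (fun _ _ _ => funext fun _ => by
      simp only [Pi.smul_apply, smul_eq_mul, Finset.mul_sum]; congr! 1; ring)

theorem pathSum_nil (a : R) (f : Λ → R) (g : List Λ → R) : pathSum a f g [] = 0 := rfl

theorem pathSum_cons (a : R) (f : Λ → R) (g : List Λ → R) (x : Λ) (l : List Λ) :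
    pathSum a f g (x :: l) = f x * g l + a * pathSum a f g l := by
  simp [pathSum, Fin.sum_univ_succ, Finset.mul_sum, pow_succ', mul_assoc]

open scoped Classical in
/-- The iterated path sums of fewer than `d` functions from `F`; the empty ones are the functions
`l ↦ a ^ l.length`. -/
noncomputable def pathSums [Fintype R] (F : Finset (Λ → R)) : ℕ → Finset (List Λ → R)
  | 0 => ∅
  | d + 1 => Finset.univ.image (fun a l => a ^ l.length) ∪
      (Finset.univ ×ˢ F ×ˢ pathSums F d).image fun t => pathSum t.1 t.2.1 t.2.2

theorem card_pathSums_le [Fintype R] (F : Finset (Λ → R)) (d : ℕ) :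
    (pathSums F d).card ≤ (Fintype.card R * (F.card + 1)) ^ d := by
  classical
  induction d with
  | zero => simp [pathSums]
  | succ d ih =>
    calc (pathSums F (d + 1)).card
      _ ≤ Fintype.card R + Fintype.card R * (F.card * (pathSums F d).card) := by
        refine (Finset.card_union_le _ _).trans (add_le_add Finset.card_image_le ?_)
        simpa using Finset.card_image_le (f := fun t => pathSum t.1 t.2.1 t.2.2)
          (s := (Finset.univ : Finset R) ×ˢ F ×ˢ pathSums F d)
      _ ≤ Fintype.card R * (Fintype.card R * (F.card + 1)) ^ d +
          Fintype.card R * (F.card * (Fintype.card R * (F.card + 1)) ^ d) := by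
        gcongr
        exact Nat.le_mul_of_pos_right _ (pow_pos (Nat.mul_pos Fintype.card_pos F.card.succ_pos) d)
      _ = (Fintype.card R * (F.card + 1)) ^ (d + 1) := by ring

theorem pathSum_mem_span_pathSums [Fintype R] {F : Finset (Λ → R)} {d : ℕ} (a : R) {f : Λ → R}
    {g : List Λ → R} (hf : f ∈ Submodule.span R (F : Set (Λ → R)))
    (hg : g ∈ Submodule.span R (pathSums F d : Set (List Λ → R))) :
    pathSum a f g ∈ Submodule.span R (pathSums F (d + 1) : Set (List Λ → R)) := by
  classical
  refine LinearMap.BilinMap.apply_apply_mem_of_mem_span _ _ _ (pathSum a)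
    (fun f hf g hg => Submodule.subset_span ?_) f g hf hg
  exact Finset.mem_union_right _ (Finset.mem_image.2 ⟨(a, f, g), by simp_all, rfl⟩)

variable {n : ℕ} {A : Λ → Matrix (Fin n) (Fin n) R} {α : Fin n → R}

theorem prod_map_apply_eq_sum_pathSum (hA : ∀ x, (A x).BlockTriangular id)
    (hα : ∀ x i, A x i i = α i) (i j : Fin n) :
    (fun l : List Λ => (l.map A).prod i j) =
      (1 : Matrix (Fin n) (Fin n) R) i j • (fun l => α i ^ l.length) +
        ∑ c ∈ Finset.Ioi i, pathSum (α i) (fun x => A x i c) fun l => (l.map A).prod c j := by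
  funext l
  induction l with
  | nil => simp [pathSum_nil]
  | cons x l ih =>
    have hrow : (A x * (l.map A).prod) i j = A x i i * (l.map A).prod i j +
        ∑ c ∈ Finset.Ioi i, A x i c * (l.map A).prod c j := by
      rw [Matrix.mul_apply, ← Finset.sum_subset (Finset.subset_univ (Finset.Ici i)),
        ← Finset.Ioi_insert, Finset.sum_insert (by simp)]
      intro c _ hc
      rw [hA x (by simpa using hc), zero_mul]
    simp only [map_cons, prod_cons, hrow, hα, ih]
    simp [pathSum_cons, Finset.sum_add_distrib, Finset.mul_sum, mul_add, pow_succ']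
    ring

theorem prod_map_apply_mem_span_pathSums [Fintype R] {F : Finset (Λ → R)}
    (hA : ∀ x, (A x).BlockTriangular id) (hα : ∀ x i, A x i i = α i)
    (hF : ∀ i j, i < j → (fun x => A x i j) ∈ Submodule.span R (F : Set (Λ → R)))
    {d : ℕ} {i : Fin n} (hd : n ≤ i + d) (j : Fin n) :
    (fun l : List Λ => (l.map A).prod i j) ∈
      Submodule.span R (pathSums F d : Set (List Λ → R)) := by
  classical
  induction d generalizing i with
  | zero => omega
  | succ d ih =>
    rw [prod_map_apply_eq_sum_pathSum hA hα]
    refine add_mem (Submodule.smul_mem _ _ (Submodule.subset_span ?_)) (sum_mem fun c hc => ?_)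
    · exact Finset.mem_union_left _ (Finset.mem_image_of_mem _ (Finset.mem_univ _))
    · have hic := Finset.mem_Ioi.1 hc
      exact pathSum_mem_span_pathSums _ (hF i c hic) (ih (by omega))

theorem prod_map_eq_of_pathSums_eq [Fintype R] {F : Finset (Λ → R)}
    (hA : ∀ x, (A x).BlockTriangular id) (hα : ∀ x i, A x i i = α i)
    (hF : ∀ i j, i < j → (fun x => A x i j) ∈ Submodule.span R (F : Set (Λ → R))) {l l' : List Λ}
    (h : ∀ g ∈ pathSums F n, g l = g l') : (l.map A).prod = (l'.map A).prod := by
  ext i j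
  have hspan : Submodule.span R (pathSums F n : Set (List Λ → R)) ≤
      LinearMap.eqLocus (LinearMap.proj l) (LinearMap.proj l' : (List Λ → R) →ₗ[R] R) :=
    Submodule.span_le.2 h
  exact hspan (prod_map_apply_mem_span_pathSums hA hα hF (Nat.le_add_left n i) j)

omit [CommSemiring R] in
theorem exists_nodup_ne_forall_eq [Fintype Λ] [Fintype R] {G : Finset (List Λ → R)}
    (h : Fintype.card R ^ G.card < (Fintype.card Λ).factorial) :
    ∃ l l' : List Λ, l.Nodup ∧ l ~ l' ∧ l ≠ l' ∧ ∀ g ∈ G, g l = g l' := by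
  classical
  let arrange (σ : Equiv.Perm Λ) : List Λ := Finset.univ.toList.map σ
  have nodup_arrange (σ : Equiv.Perm Λ) : (arrange σ).Nodup :=
    (Finset.nodup_toList _).map σ.injective
  have mem_arrange (σ : Equiv.Perm Λ) (x : Λ) : x ∈ arrange σ :=
    mem_map.2 ⟨σ.symm x, by simp, σ.apply_symm_apply x⟩
  obtain ⟨σ, τ, hne, heq⟩ := Fintype.exists_ne_map_eq_of_card_lt
    (fun (σ : Equiv.Perm Λ) (g : G) => g.1 (arrange σ)) (by simpa [Fintype.card_perm] using h)
  refine ⟨arrange σ, arrange τ, nodup_arrange σ,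
    (perm_ext_iff_of_nodup (nodup_arrange σ) (nodup_arrange τ)).2 fun x => by simp [mem_arrange],
    fun hl => hne ?_, fun g hg => congrFun heq ⟨g, hg⟩⟩
  exact Equiv.ext fun x => map_inj_left.1 hl x (by simp)

end PathSums

/-! ### Products of two-valued matrix families -/

section Filtration

variable {Λ R : Type*} [CommSemiring R]

/-- The families of upper triangular matrices whose `(i, j)` entry, as a function of the index in
`Λ`, is a polynomial of degree `j - i` in the functions from `V`. -/
def graded (n : ℕ) (V : Submodule R (Λ → R)) : Submonoid (Λ → Matrix (Fin n) (Fin n) R) where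
  carrier := {A | (∀ x, (A x).BlockTriangular id) ∧
    ∀ i j : Fin n, i ≤ j → (fun x => A x i j) ∈ V ^ (j - i : ℕ)}
  one_mem' := by
    refine ⟨fun _ => Matrix.blockTriangular_one, fun i j hij => ?_⟩
    obtain rfl | hne := eq_or_ne i j
    · simpa [Submodule.mem_one] using ⟨1, rfl⟩
    · simp only [Pi.one_apply, Matrix.one_apply_ne hne]
      exact zero_mem _
  mul_mem' := by
    rintro A B ⟨hA, hAV⟩ ⟨hB, hBV⟩
    refine ⟨fun x => (hA x).mul (hB x), fun i j _ => ?_⟩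
    have hmul : (fun x => (A * B) x i j) = ∑ c, (fun x => A x i c) * fun x => B x c j := by
      ext x
      simp [Matrix.mul_apply]
    rw [hmul]
    refine sum_mem fun c _ => ?_
    rcases lt_or_ge c i with hci | hic
    · simp [hA _ hci, ← Pi.zero_def]
    rcases lt_or_ge j c with hjc | hcj
    · simp [hB _ hjc, ← Pi.zero_def]
    have hdeg : (j - i : ℕ) = (c - i) + (j - c) := by omega
    rw [hdeg, pow_add]
    exact Submodule.mul_mem_mul (hAV i c hic) (hBV c j hcj)

variable {n : ℕ}

theorem exists_apply_self_eq_of_mem_graded {V : Submodule R (Λ → R)}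
    {A : Λ → Matrix (Fin n) (Fin n) R} (hA : A ∈ graded n V) :
    ∃ α : Fin n → R, ∀ x i, A x i i = α i := by
  have hconst (i : Fin n) : ∃ a, ∀ x, A x i i = a := by
    obtain ⟨a, ha⟩ := Submodule.mem_one.1 (by simpa using hA.2 i i le_rfl)
    exact ⟨a, fun x => (congrFun ha x).symm⟩
  choose α hα using hconst
  exact ⟨α, fun x i => hα i x⟩

theorem prod_map_eq_of_mem_graded [Fintype R] {V : Submodule R (Λ → R)} (hV : 1 ≤ V)
    {F : Finset (Λ → R)} (hF : V ^ n = Submodule.span R F) {A : Λ → Matrix (Fin n) (Fin n) R}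
    (hA : A ∈ graded n V) {l l' : List Λ} (h : ∀ g ∈ pathSums F n, g l = g l') :
    (l.map A).prod = (l'.map A).prod := by
  obtain ⟨α, hα⟩ := exists_apply_self_eq_of_mem_graded hA
  refine prod_map_eq_of_pathSums_eq hA.1 hα (fun i j hij => ?_) h
  exact hF ▸ pow_le_pow_right₀ hV (by omega) (hA.2 i j hij.le)

end Filtration

section Coordinates

variable {κ : Type*} (R : Type*) [CommSemiring R]

open scoped Classical in
/-- The indicator functions of the sets `{x | x k = b}`. -/
noncomputable def coordIndicators (κ : Type*) [Fintype κ] : Finset ((κ → Bool) → R) :=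
  Finset.univ.image fun (p : κ × Bool) x => if x p.1 = p.2 then 1 else 0

/-- The families of upper triangular matrices, indexed by boolean vectors, that depend on a single
coordinate only and have constant diagonal. -/
def coordFamilies (n : ℕ) (κ : Type*) : Set ((κ → Bool) → Matrix (Fin n) (Fin n) R) :=
  {A | ∃ k, ∃ U ∈ upperTriangular (Fin n) R, ∃ V ∈ upperTriangular (Fin n) R,
    (∀ i, U i i = V i i) ∧ A = fun x => if x k then U else V}

variable {R} [Fintype κ]

theorem card_coordIndicators_le : (coordIndicators R κ).card ≤ 2 * Fintype.card κ := by
  classical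
  refine Finset.card_image_le.trans_eq ?_
  simp [mul_comm]

theorem ite_mem_span_coordIndicators (k : κ) (a b : R) :
    (fun x => if x k then a else b) ∈
      Submodule.span R (coordIndicators R κ : Set ((κ → Bool) → R)) := by
  classical
  have hmem (b : Bool) : (fun x => if x k = b then 1 else 0) ∈
      Submodule.span R (coordIndicators R κ : Set ((κ → Bool) → R)) :=
    Submodule.subset_span (Finset.mem_image.2 ⟨(k, b), Finset.mem_univ _, rfl⟩)
  convert add_mem (Submodule.smul_mem _ a (hmem true)) (Submodule.smul_mem _ b (hmem false)) with x
  cases h : x k <;> simp [h]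

theorem one_le_span_coordIndicators [Nonempty κ] :
    1 ≤ Submodule.span R (coordIndicators R κ : Set ((κ → Bool) → R)) := by
  inhabit κ
  simpa [Submodule.one_le, Pi.one_def] using ite_mem_span_coordIndicators (default : κ) (1 : R) 1

variable {n : ℕ}

theorem coordFamilies_subset_graded :
    coordFamilies R n κ ⊆
      graded n (Submodule.span R (coordIndicators R κ : Set ((κ → Bool) → R))) := by
  rintro A ⟨k, U, hU, V, hV, hUV, rfl⟩
  have htri (x : κ → Bool) : (if x k then U else V).BlockTriangular id := by
    split_ifs <;> assumption
  refine ⟨htri, fun i j hij => ?_⟩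
  have hite : (fun x : κ → Bool => (if x k then U else V) i j) =
      fun x => if x k then U i j else V i j := by
    funext x
    split_ifs <;> rfl
  rw [hite]
  have := Nonempty.intro k
  obtain rfl | hne := eq_or_ne i j
  · simpa [hUV, Submodule.mem_one] using ⟨V i i, rfl⟩
  · have hdeg : (j - i : ℕ) ≠ 0 := by omega
    exact SetLike.le_def.1 (le_self_pow₀ one_le_span_coordIndicators hdeg)
      (ite_mem_span_coordIndicators k _ _)

open scoped Pointwise in
theorem exists_nodup_ne_prod_map_eq [Nonempty κ] [Fintype R]
    (hcard : Fintype.card R ^ (Fintype.card R * ((2 * Fintype.card κ) ^ n + 1)) ^ n <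
      (2 ^ Fintype.card κ).factorial) :
    ∃ l l' : List (κ → Bool), l.Nodup ∧ l ~ l' ∧ l ≠ l' ∧
      ∀ A ∈ Submonoid.closure (coordFamilies R n κ), (l.map A).prod = (l'.map A).prod := by
  classical
  have hF : (coordIndicators R κ ^ n).card ≤ (2 * Fintype.card κ) ^ n :=
    Finset.card_pow_le.trans (Nat.pow_le_pow_left card_coordIndicators_le n)
  have hG : (pathSums (coordIndicators R κ ^ n) n).card ≤
      (Fintype.card R * ((2 * Fintype.card κ) ^ n + 1)) ^ n :=
    (card_pathSums_le _ n).trans (by gcongr)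
  obtain ⟨l, l', hl, hperm, hne, heq⟩ := exists_nodup_ne_forall_eq
    (G := pathSums (coordIndicators R κ ^ n) n) (by
      refine (Nat.pow_le_pow_right Fintype.card_pos hG).trans_lt ?_
      simpa using hcard)
  refine ⟨l, l', hl, hperm, hne, fun A hA => ?_⟩
  refine prod_map_eq_of_mem_graded one_le_span_coordIndicators ?_
    (Submonoid.closure_le.2 coordFamilies_subset_graded hA) heq
  rw [Submodule.span_pow, Finset.coe_pow]

end Coordinates

open Asymptotics Filter in
theorem exists_mul_pow_lt_two_pow (C k : ℕ) : ∃ q, 0 < q ∧ C * q ^ k + 1 < 2 ^ q := by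
  have hlittle : (fun q : ℕ => (q : ℝ) ^ k) =o[atTop] fun q => (2 : ℝ) ^ q :=
    isLittleO_pow_const_const_pow_of_one_lt k one_lt_two
  have hC : (0 : ℝ) < ((C + 2 : ℕ) : ℝ)⁻¹ := by positivity
  obtain ⟨q, hq, hq0⟩ := ((hlittle.def hC).and (eventually_gt_atTop 0)).exists
  refine ⟨q, hq0, ?_⟩
  rw [Real.norm_of_nonneg (by positivity), Real.norm_of_nonneg (by positivity),
    le_inv_mul_iff₀ (by positivity)] at hq
  have hq' : (C + 2) * q ^ k ≤ 2 ^ q := by exact_mod_cast hq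
  have : 0 < q ^ k := by positivity
  linarith

theorem exists_pow_lt_factorial (r n : ℕ) :
    ∃ q, 0 < q ∧ r ^ (r * ((2 * q) ^ n + 1)) ^ n < (2 ^ q).factorial := by
  obtain ⟨q, hq, hlt⟩ := exists_mul_pow_lt_two_pow (r * (r * (2 * 2 ^ n)) ^ n) (n * n)
  have hone : 1 ≤ (2 * q) ^ n := Nat.one_le_pow _ _ (by omega)
  have hexp : r * (r * ((2 * q) ^ n + 1)) ^ n < 2 ^ q - 1 :=
    calc r * (r * ((2 * q) ^ n + 1)) ^ n
      _ ≤ r * (r * ((2 * q) ^ n + (2 * q) ^ n)) ^ n := by gcongr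
      _ = r * (r * (2 * 2 ^ n)) ^ n * q ^ (n * n) := by ring
      _ < 2 ^ q - 1 := Nat.lt_sub_of_add_lt hlt
  have hfactorial : 2 ^ (2 ^ q - 1) ≤ (2 ^ q).factorial := by
    have := Nat.factorial_mul_pow_le_factorial (m := 1) (n := 2 ^ q - 1)
    rwa [Nat.factorial_one, one_mul, Nat.add_sub_cancel' Nat.one_le_two_pow] at this
  exact ⟨q, hq,
    calc r ^ (r * ((2 * q) ^ n + 1)) ^ n
      _ ≤ (2 ^ r) ^ (r * ((2 * q) ^ n + 1)) ^ n := Nat.pow_le_pow_left Nat.lt_two_pow_self.le _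
      _ = 2 ^ (r * (r * ((2 * q) ^ n + 1)) ^ n) := (pow_mul _ _ _).symm
      _ < 2 ^ (2 ^ q - 1) := Nat.pow_lt_pow_right one_lt_two hexp
      _ ≤ (2 ^ q).factorial := hfactorial⟩

/-! ### Words indexed by lists of boolean vectors -/

section Words

variable {q B : ℕ}

/-- The word that encodes a boolean vector `x` in `B` sites. The site `s` consists of the letters
`2 * s` and `2 * s + 1`, in an order that depends on the coordinate of `x` at the residue of `s`. -/
def block (B : ℕ) (x : ZMod q → Bool) : List ℕ :=
  (range B).flatMap fun s : ℕ => [Nat.bit (x s) s, Nat.bit (!x s) s]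

/-- The concatenation of the blocks of a list of boolean vectors. These words form the two sides of
the identities that have no finite basis. -/
def blockWord (B : ℕ) (l : List (ZMod q → Bool)) : List ℕ :=
  l.flatMap (block B)

theorem length_block (x : ZMod q → Bool) : (block B x).length = 2 * B := by
  simp [block, length_flatMap, mul_comm]

theorem length_blockWord (l : List (ZMod q → Bool)) :
    (blockWord B l).length = l.length * (2 * B) := by
  simp [blockWord, length_flatMap, length_block]

theorem getElem?_flatMap_of_length_eq {α β : Type*} {f : α → List β} {m : ℕ} (hm : 0 < m)
    (hf : ∀ x, (f x).length = m) (l : List α) (p : ℕ) :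
    (l.flatMap f)[p]? = l[p / m]?.bind fun x => (f x)[p % m]? := by
  induction l generalizing p with
  | nil => simp
  | cons x l ih =>
    rw [flatMap_cons, getElem?_append, hf]
    split_ifs with hp
    · simp [Nat.div_eq_of_lt hp, Nat.mod_eq_of_lt hp]
    · obtain ⟨p, rfl⟩ := Nat.exists_eq_add_of_le (not_lt.1 hp)
      simp [ih, Nat.add_div_left p hm]

theorem getElem?_blockWord (hB : 0 < B) (l : List (ZMod q → Bool)) (p : ℕ) :
    (blockWord B l)[p]? = l[p / (2 * B)]?.map fun x =>
      Nat.bit (x (p / 2 % B : ℕ) ^^ p % 2 == 1) (p / 2 % B) := by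
  rw [blockWord, getElem?_flatMap_of_length_eq (m := 2 * B) (by omega) length_block,
    Option.map_eq_bind]
  refine congrArg _ (funext fun x => ?_)
  rw [block, getElem?_flatMap_of_length_eq (m := 2) two_pos (fun _ => rfl),
    Nat.mod_mul_right_div_self, Nat.mod_mul_right_mod, getElem?_range (Nat.mod_lt _ hB)]
  obtain hp | hp := Nat.mod_two_eq_zero_or_one p <;> simp [hp]

theorem div_two_mod_eq_of_getElem?_blockWord (hB : 0 < B) {l : List (ZMod q → Bool)} {p w : ℕ}
    (h : (blockWord B l)[p]? = some w) : p / 2 % B = w / 2 := by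
  rw [getElem?_blockWord hB] at h
  obtain ⟨x, -, rfl⟩ := Option.map_eq_some_iff.1 h
  exact (Nat.bit_div_two _ _).symm

theorem add_le_of_getElem?_blockWord (hB : 0 < B) {l : List (ZMod q → Bool)} {p p' w : ℕ}
    (hlt : p < p') (hp : (blockWord B l)[p]? = some w) (hp' : (blockWord B l)[p']? = some w) :
    p + 2 * B ≤ p' + 1 := by
  have hmod : p / 2 ≡ p' / 2 [MOD B] := (div_two_mod_eq_of_getElem?_blockWord hB hp).trans
    (div_two_mod_eq_of_getElem?_blockWord hB hp').symm
  obtain heq | hne := eq_or_ne (p / 2) (p' / 2)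
  · have hpar : p % 2 = 0 ∧ p' % 2 = 1 := by omega
    rw [getElem?_blockWord hB, ← Nat.div_div_eq_div_mul] at hp hp'
    rw [← heq] at hp'
    cases hx : l[p / 2 / B]? with
    | none => simp [hx] at hp
    | some x =>
      have hbit := congrArg (Option.map Nat.bodd) (hp.trans hp'.symm)
      simp [hx, hpar] at hbit
  · have := hmod.add_le_of_lt (by omega)
    omega

theorem le_of_isInfix_blockWord (hB : 0 < B) {l : List (ZMod q → Bool)} {w : ℕ} {C : List ℕ}
    (h : w :: (C ++ [w]) <:+: blockWord B l) : 2 * B ≤ C.length + 2 := by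
  obtain ⟨a, b, hab⟩ := h
  have hle := add_le_of_getElem?_blockWord hB (l := l) (p := a.length)
    (p' := a.length + C.length + 1) (w := w) (by omega)
    (by rw [← hab]; grind) (by rw [← hab]; grind)
  omega

variable {M : ℕ} [NeZero q]

theorem getElem?_blockWord_site (hM : 0 < M) (l : List (ZMod q → Bool)) (u : ℕ) (z : ZMod q) :
    (blockWord (q * M) l)[2 * (q * u + z.val)]? =
      l[u / M]?.map fun x => Nat.bit (x z) (q * (u % M) + z.val) := by
  have hq : 0 < q := NeZero.pos q
  have hz := z.val_lt
  have hdiv : (q * u + z.val) / (q * M) = u / M := by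
    rw [← Nat.div_div_eq_div_mul, Nat.mul_add_div hq, Nat.div_eq_of_lt hz, add_zero]
  have hmod : (q * u + z.val) % (q * M) = q * (u % M) + z.val := by
    rw [Nat.mod_mul, Nat.mul_add_mod, Nat.mod_eq_of_lt hz, Nat.mul_add_div hq, Nat.div_eq_of_lt hz,
      add_zero, add_comm]
  rw [getElem?_blockWord (Nat.mul_pos hq hM), Nat.mul_div_mul_left _ _ two_pos,
    Nat.mul_div_cancel_left _ two_pos, Nat.mul_mod_right, hdiv, hmod]
  simp

theorem getElem?_eq_of_blockWord (hM : 0 < M) {l l' : List (ZMod q → Bool)} {u u' : ℕ}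
    (hu : u % M = u' % M) (h : ∀ z : ZMod q, (blockWord (q * M) l)[2 * (q * u + z.val)]? =
      (blockWord (q * M) l')[2 * (q * u' + z.val)]?) : l[u / M]? = l'[u' / M]? := by
  simp only [getElem?_blockWord_site hM, hu] at h
  cases hx : l[u / M]? with
  | none => simpa [hx, eq_comm] using h 0
  | some x =>
    cases hx' : l'[u' / M]? with
    | none => simpa [hx, hx'] using h 0
    | some x' =>
      refine congrArg some (funext fun z => ?_)
      simpa [hx, hx'] using congrArg (Option.map Nat.bodd) (h z)

theorem blockWord_injective (hM : 0 < M) :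
    Function.Injective (blockWord (q := q) (q * M)) := by
  intro l l' h
  refine List.ext_getElem? fun i => ?_
  simpa [hM] using getElem?_eq_of_blockWord (u := M * i) (u' := M * i) hM rfl
    fun z => by rw [h]

theorem modEq_two_mul_of_div_two_modEq (hB : 2 ≤ B) {p p' : ℕ} (h : p / 2 ≡ p' / 2 [MOD B])
    (h' : (p + 1) / 2 ≡ (p' + 1) / 2 [MOD B]) : p ≡ p' [MOD 2 * B] := by
  have hsucc (n : ℕ) : (n + 1) / 2 = n / 2 + n % 2 := by omega
  rw [hsucc, hsucc] at h'
  have hpar : p % 2 = p' % 2 :=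
    (h.add_left_cancel h').eq_of_lt_of_lt (by omega) (by omega)
  have := (h.mul_left' 2).add_right (p % 2)
  rwa [Nat.div_add_mod, hpar, Nat.div_add_mod] at this

theorem lt_mul_succ_div_le (q p : ℕ) [NeZero q] :
    p < 2 * (q * (p / (2 * q) + 1)) ∧ 2 * (q * (p / (2 * q) + 1)) ≤ p + 2 * q := by
  have hpos : 0 < 2 * q := Nat.mul_pos two_pos (NeZero.pos q)
  rw [← mul_assoc]
  exact ⟨Nat.lt_mul_div_succ p hpos, by grind [Nat.mul_div_le p (2 * q)]⟩

-- A window of `4 * q` positions contains `q` consecutive sites starting at a multiple of `q`, and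
-- these display all coordinates of one boolean vector.
theorem getElem?_eq_of_window (hM : 0 < M) {l : List (ZMod q → Bool)} {p D : ℕ}
    (h : ∀ i < 4 * q,
      (blockWord (q * M) l)[p + i]? = (blockWord (q * M) l)[p + 2 * (q * M) * D + i]?) :
    l[(p / (2 * q) + 1) / M]? = l[(p / (2 * q) + 1) / M + D]? := by
  obtain ⟨hlt, hle⟩ := lt_mul_succ_div_le q p
  set u := p / (2 * q) + 1
  rw [← Nat.add_mul_div_left _ _ hM]
  refine getElem?_eq_of_blockWord hM (by simp) fun z => ?_
  have hz := z.val_lt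
  obtain ⟨i, hi⟩ : ∃ i, 2 * (q * u + z.val) = p + i := Nat.exists_eq_add_of_le (by omega)
  have hi' : 2 * (q * (u + M * D) + z.val) = p + 2 * (q * M) * D + i := by linarith
  rw [hi, hi', h i (by omega)]

theorem length_lt_of_isInfix_blockWord (hM : 2 ≤ M) {l : List (ZMod q → Bool)} (hl : l.Nodup)
    {W C : List ℕ} (h : W ++ C ++ W <:+: blockWord (q * M) l) : W.length < 4 * q := by
  by_contra! hW
  have hq : 0 < q := NeZero.pos q
  have hB : 2 ≤ q * M := hM.trans (Nat.le_mul_of_pos_left M hq)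
  obtain ⟨a, b, hab⟩ := h
  have hfst (i : ℕ) (hi : i < W.length) : (blockWord (q * M) l)[a.length + i]? = some W[i] := by
    rw [← hab]
    grind
  have hsnd (i : ℕ) (hi : i < W.length) :
      (blockWord (q * M) l)[a.length + (W.length + C.length) + i]? = some W[i] := by
    rw [← hab]
    grind
  have hdiv (i : ℕ) (hi : i < W.length) :
      (a.length + i) / 2 ≡ (a.length + (W.length + C.length) + i) / 2 [MOD q * M] :=
    (div_two_mod_eq_of_getElem?_blockWord (by omega) (hfst i hi)).trans
      (div_two_mod_eq_of_getElem?_blockWord (by omega) (hsnd i hi)).symm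
  obtain ⟨D, hD⟩ : 2 * (q * M) ∣ W.length + C.length :=
    Nat.modEq_zero_iff_dvd.1 (Nat.ModEq.add_left_cancel' a.length
      (modEq_two_mul_of_div_two_modEq hB (hdiv 0 (by omega)) (hdiv 1 (by omega)))).symm
  have hrow : l[(a.length / (2 * q) + 1) / M]? = l[(a.length / (2 * q) + 1) / M + D]? :=
    getElem?_eq_of_window (by omega) fun i hi => by
      rw [← hD, hfst i (by omega), hsnd i (by omega)]
  have hlen : (a.length / (2 * q) + 1) / M < l.length := by
    have hword := congrArg length hab
    simp only [length_append, length_blockWord] at hword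
    have := (lt_mul_succ_div_le q a.length).2
    rw [Nat.div_lt_iff_lt_mul (by omega)]
    refine Nat.lt_of_mul_lt_mul_left (a := 2 * q) ?_
    grind
  have := (getElem?_inj hlen hl).1 hrow
  obtain rfl : D = 0 := by omega
  omega

end Words

/-! ### Identities between block words -/

section Identities

variable {q : ℕ} {R : Type*} [CommSemiring R]

theorem prod_map_blockWord {M : Type*} [Monoid M] (f : ℕ → M) (B : ℕ) (l : List (ZMod q → Bool)) :
    ((blockWord B l).map f).prod =
      (l.map ((range B).map fun (s : ℕ) (x : ZMod q → Bool) =>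
        f (Nat.bit (x s) s) * f (Nat.bit (!x s) s)).prod).prod := by
  have hblock (x : ZMod q → Bool) :
      ((block B x).map f).prod =
        ((range B).map fun (s : ℕ) (x : ZMod q → Bool) =>
          f (Nat.bit (x s) s) * f (Nat.bit (!x s) s)).prod x := by
    rw [block, Pi.list_prod_apply, map_map, map_flatMap, flatMap_def, prod_flatten, map_map]
    simp [Function.comp_def]
  rw [blockWord, map_flatMap, flatMap_def, prod_flatten, map_map]
  exact congrArg prod (map_congr_left fun x _ => hblock x)

theorem mul_apply_self_of_blockTriangular {ι R : Type*} [Fintype ι] [LinearOrder ι]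
    [NonUnitalNonAssocSemiring R] {U V : Matrix ι ι R} (hU : U.BlockTriangular id)
    (hV : V.BlockTriangular id) (i : ι) : (U * V) i i = U i i * V i i := by
  rw [Matrix.mul_apply]
  refine Fintype.sum_eq_single i fun c hc => ?_
  rcases hc.lt_or_gt with hci | hic
  · rw [hU hci, zero_mul]
  · rw [hV hic, mul_zero]

theorem site_mem_coordFamilies {n : ℕ} {f : ℕ → Matrix (Fin n) (Fin n) R}
    (hf : ∀ x, f x ∈ upperTriangular (Fin n) R) (s : ℕ) :
    (fun x : ZMod q → Bool => f (Nat.bit (x s) s) * f (Nat.bit (!x s) s)) ∈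
      coordFamilies R n (ZMod q) := by
  refine ⟨s, _, mul_mem (hf (Nat.bit true s)) (hf (Nat.bit false s)), _,
    mul_mem (hf (Nat.bit false s)) (hf (Nat.bit true s)), fun i => ?_, funext fun x => ?_⟩
  · rw [mul_apply_self_of_blockTriangular (hf _) (hf _),
      mul_apply_self_of_blockTriangular (hf _) (hf _), mul_comm]
  · cases h : x s <;> simp

theorem satisfies_of_letters_eq_blockWord {n B : ℕ} {l l' : List (ZMod q → Bool)}
    (h : ∀ A ∈ Submonoid.closure (coordFamilies R n (ZMod q)), (l.map A).prod = (l'.map A).prod)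
    {u v : FreeSemigroup ℕ} (hu : letters u = blockWord B l) (hv : letters v = blockWord B l') :
    Satisfies (upperTriangular (Fin n) R) u v := by
  refine satisfies_coe_iff.2 fun f hf => ?_
  rw [hu, hv, prod_map_blockWord, prod_map_blockWord]
  refine h _ (list_prod_mem fun A hA => Submonoid.subset_closure ?_)
  obtain ⟨s, -, rfl⟩ := mem_map.1 hA
  exact site_mem_coordFamilies hf s

theorem separated_of_lift_isInfix_blockWord [NeZero q] {M : ℕ} {p : FreeSemigroup ℕ}
    (hM : 2 * (letters p).length + 2 ≤ M) {l : List (ZMod q → Bool)} (hl : l.Nodup)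
    {φ : ℕ → FreeSemigroup ℕ} (h : letters (FreeSemigroup.lift φ p) <:+: blockWord (q * M) l) :
    Separated (letters p) := by
  have hq : 0 < q := NeZero.pos q
  rw [letters_lift] at h
  refine separated_of_flatMap_isInfix (m := 4 * q) (K := 2 * (q * M) - 2)
    (fun W C => length_lt_of_isInfix_blockWord (by omega) hl)
    (fun w C hw => Nat.sub_le_of_le_add
      (le_of_isInfix_blockWord (Nat.mul_pos hq (by omega)) hw))
    (fun x => letters_ne_nil (φ x)) ?_ h
  refine Nat.le_sub_of_add_le ?_
  calc (letters p).length * (4 * q) + 2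
    _ ≤ 2 * (q * (2 * (letters p).length + 2)) := by linarith
    _ ≤ 2 * (q * M) := by gcongr

theorem exists_letters_eq_blockWord {B : ℕ} (hB : 0 < B) {l : List (ZMod q → Bool)}
    (hl : l ≠ []) : ∃ u, letters u = blockWord B l := by
  refine exists_letters_eq (length_pos_iff.1 ?_)
  rw [length_blockWord]
  exact Nat.mul_pos (length_pos_iff.2 hl) (by omega)

end Identities

end TriangularIdentities

open TriangularIdentities in
theorem Tn2_nonfinitely_based_general (R : Type*) [CommSemiring R] [Finite R] [Nontrivial R]
    (n : ℕ) (hn : 3 < n) : ¬ FinitelyBased (upperTriangular (Fin n) R) := by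
  have := Fintype.ofFinite R
  refine not_finitelyBased_of_isIsoterm fun k => ?_
  obtain ⟨q, hq, hcard⟩ := exists_pow_lt_factorial (Fintype.card R) n
  have : NeZero q := ⟨hq.ne'⟩
  obtain ⟨l, l', hl, hperm, hne, hprod⟩ :=
    exists_nodup_ne_prod_map_eq (κ := ZMod q) (n := n) (R := R) (by rwa [ZMod.card])
  have hM : 0 < 2 * k + 2 := by omega
  have hB : 0 < q * (2 * k + 2) := Nat.mul_pos hq hM
  obtain ⟨u, hu⟩ := exists_letters_eq_blockWord hB fun h : l = [] =>
    hne (by simpa [h, eq_comm] using hperm)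
  obtain ⟨v, hv⟩ := exists_letters_eq_blockWord hB fun h : l' = [] =>
    hne (by simpa [h] using hperm)
  refine ⟨u, v, satisfies_of_letters_eq_blockWord hprod hu hv, ?_, fun p hp φ hφ => ?_⟩
  · rintro rfl
    exact hne (blockWord_injective hM (hu.symm.trans hv))
  · have hsep : Separated (letters p) :=
      separated_of_lift_isInfix_blockWord (M := 2 * k + 2) (by omega) hl (hu ▸ hφ)
    exact isIsoterm_of_separated (a := (⟨0, by omega⟩ : Fin n)) (b := ⟨1, by omega⟩)
      (c := ⟨2, by omega⟩) (d := ⟨3, hn⟩) (by simp) (by simp) (by simp) hsep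

/-- **For each `n > 3`, the semigroup `T_n(2)` of all upper triangular `n × n` matrices over
the two-element field is nonfinitely based.** -/
theorem Tn2_nonfinitely_based (n : ℕ) (hn : 3 < n) : ¬ FinitelyBased ↥(TriSub n) :=
  Tn2_nonfinitely_based_general (ZMod 2) n hn
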